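/- A diagonal measure σ on X^d is a graph joining arising from powers of T if and only if there exists n₁ ≥ n₀(σ) such that for all n ≥ n₁ the transition from D_n(σ) to D_{n+1}(σ) is the central case, i.e. D_{n+1}(σ) = D_n(σ)(1,…,1). -/

import Mathlib

open MeasureTheory Set
open scoped ENNReal NNReal Classical

noncomputable section

/-- Heights of the towers of the infinite Chacon transformation
(tower `0` is `[0,1)` with a single level, so `chaconH 1 = 8`). -/
def chaconH : ℕ → ℕ
  | 0 => 1
  | n + 1 => 2 * (3 * chaconH n + 1)

/-- Left endpoint of level `k` of tower `n`.  At step `n+1`, tower `n` (which fills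
`[0, hₙ·3⁻ⁿ)`) is cut into three subcolumns of equal width; one spacer is added above the
middle subcolumn and `3hₙ+1` spacers above the third one, the spacers being taken
successively as the leftmost intervals of length `3⁻⁽ⁿ⁺¹⁾` in the unused part of `ℝ₊`;
then the three subcolumns are stacked left under right. -/
def chaconL : ℕ → ℕ → ℝ
  | 0, _ => 0
  | n + 1, k =>
      if k < chaconH n then chaconL n k
      else if k < 2 * chaconH n then chaconL n (k - chaconH n) + (3 : ℝ)⁻¹ ^ (n + 1)
      else if k = 2 * chaconH n then (chaconH n : ℝ) * (3 : ℝ)⁻¹ ^ n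
      else if k ≤ 3 * chaconH n then
        chaconL n (k - 2 * chaconH n - 1) + 2 * (3 : ℝ)⁻¹ ^ (n + 1)
      else (chaconH n : ℝ) * (3 : ℝ)⁻¹ ^ n
        + ((k : ℝ) - 3 * (chaconH n : ℝ)) * (3 : ℝ)⁻¹ ^ (n + 1)

/-- Level `k` of tower `n`: an interval of length `3⁻ⁿ`, closed to the left and open to
the right. -/
def chaconLevel (n k : ℕ) : Set ℝ := Ico (chaconL n k) (chaconL n k + (3 : ℝ)⁻¹ ^ n)

/-- The Chacon transformation on `ℝ`: each point of a non-top level of some tower is sent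
to the point directly above it (the value does not depend on the choice of the tower). -/
def chaconT0 (x : ℝ) : ℝ :=
  if h : ∃ p : ℕ × ℕ, p.2 + 1 < chaconH p.1 ∧ x ∈ chaconLevel p.1 p.2 then
    x - chaconL h.choose.1 h.choose.2 + chaconL h.choose.1 (h.choose.2 + 1)
  else x

/-- The inverse of the Chacon transformation on `ℝ`. -/
def chaconT0inv (x : ℝ) : ℝ :=
  if h : ∃ p : ℕ × ℕ, p.2 + 1 < chaconH p.1 ∧ x ∈ chaconLevel p.1 (p.2 + 1) then
    x - chaconL h.choose.1 (h.choose.2 + 1) + chaconL h.choose.1 h.choose.2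
  else x

/-- The space `X = ℝ₊`. -/
abbrev ChaconX : Type := ↥(Set.Ici (0 : ℝ))

/-- The infinite Chacon transformation `T` on `X = ℝ₊`. -/
def chaconT (x : ChaconX) : ChaconX :=
  ⟨max 0 (chaconT0 (x : ℝ)), Set.mem_Ici.mpr (le_max_left 0 _)⟩

/-- The inverse `T⁻¹` of the Chacon transformation on `X = ℝ₊`. -/
def chaconTinv (x : ChaconX) : ChaconX :=
  ⟨max 0 (chaconT0inv (x : ℝ)), Set.mem_Ici.mpr (le_max_left 0 _)⟩

/-- Integer powers `T^j` of the Chacon transformation. -/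
def chaconTZ (j : ℤ) : ChaconX → ChaconX :=
  if 0 ≤ j then chaconT^[j.toNat] else chaconTinv^[(-j).toNat]

/-- Lebesgue measure `μ` on `X = ℝ₊`. -/
def chaconMu : Measure ChaconX := volume.comap Subtype.val

/-- `C n`: the bottom half of tower `n` (its lowest `hₙ/2` levels), as a subset of `X`. -/
def chaconC (n : ℕ) : Set ChaconX :=
  {x | ∃ k, k < chaconH n / 2 ∧ (x : ℝ) ∈ chaconLevel n k}

/-- `tₙ x ∈ {1,2,3}`: the subcolumn of tower `n` containing `x`
(junk value `0` if `x` is not in tower `n`). -/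
def chaconTn (n : ℕ) (x : ChaconX) : ℕ :=
  if h : ∃ k, k < chaconH n ∧ (x : ℝ) ∈ chaconLevel n k then
    1 + (⌊((x : ℝ) - chaconL n h.choose) * (3 : ℝ) ^ (n + 1)⌋).toNat
  else 0

/-- The Cartesian power `T^{×ι}` of the Chacon transformation, acting coordinatewise. -/
def chaconTd (ι : Type) (x : ι → ChaconX) : ι → ChaconX := fun i => chaconT (x i)

/-- Integer powers `(T^{×ι})^j`, acting coordinatewise. -/
def chaconTdZ (ι : Type) (j : ℤ) (x : ι → ChaconX) : ι → ChaconX := fun i => chaconTZ j (x i)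

/-- `Cₙ^ι ⊆ X^ι`. -/
def chaconCd (ι : Type) (n : ℕ) : Set (ι → ChaconX) := {x | ∀ i, x i ∈ chaconC n}

/-- An `n`-box: a Cartesian product of levels of `C n`. -/
def IsNBox (ι : Type) (n : ℕ) (B : Set (ι → ChaconX)) : Prop :=
  ∃ k : ι → ℕ, (∀ i, k i < chaconH n / 2) ∧
    B = {x : ι → ChaconX | ∀ i, ((x i : ℝ)) ∈ chaconLevel n (k i)}

/-- An `n`-diagonal: a maximal finite family of `n`-boxes `B, T^{×d}B, …, (T^{×d})^ℓ B`,
regarded as the union of its boxes. -/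
def IsNDiagonal (ι : Type) (n : ℕ) (D : Set (ι → ChaconX)) : Prop :=
  ∃ (B : Set (ι → ChaconX)) (ℓ : ℕ),
    (∀ j : ℕ, j ≤ ℓ → IsNBox ι n (chaconTdZ ι (j : ℤ) '' B)) ∧
    ¬ chaconTdZ ι (-1) '' B ⊆ chaconCd ι n ∧
    ¬ chaconTdZ ι ((ℓ : ℤ) + 1) '' B ⊆ chaconCd ι n ∧
    D = ⋃ j ∈ Finset.range (ℓ + 1), chaconTdZ ι (j : ℤ) '' B

/-- A measure is boundedly finite if bounded (measurable) sets have finite measure. -/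
def BoundedlyFinite {α : Type*} [MeasurableSpace α] [PseudoMetricSpace α]
    (σ : Measure α) : Prop :=
  ∀ A : Set α, MeasurableSet A → Bornology.IsBounded A → σ A < ⊤

/-- Diagonal measures on `X^ι`: boundedly finite, `T^{×ι}`-invariant measures which are,
for every large enough `n`, concentrated on a single `n`-diagonal inside `Cₙ^ι`. -/
def IsDiagonalMeasure (ι : Type) [Fintype ι] (σ : Measure (ι → ChaconX)) : Prop :=
  BoundedlyFinite σ ∧ σ.map (chaconTd ι) = σ ∧
    ∃ n₀ : ℕ, 1 ≤ n₀ ∧ ∀ n, n₀ ≤ n →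
      ∃ D : Set (ι → ChaconX), IsNDiagonal ι n D ∧ σ (chaconCd ι n \ D) = 0

/-- A wandering set for the `ℤ`-action `Uz`. -/
def ZWandering {α : Type*} (Uz : ℤ → α → α) (W : Set α) : Prop :=
  ∀ j k : ℤ, j ≠ k → Disjoint (Uz j '' W) (Uz k '' W)

/-- Conservativity: every measurable wandering set is null. -/
def ZConservative {α : Type*} [MeasurableSpace α] (σ : Measure α) (Uz : ℤ → α → α) : Prop :=
  ∀ W : Set α, MeasurableSet W → ZWandering Uz W → σ W = 0

/-- Total dissipativity: mod `σ`, the space is the disjoint union of the iterates of a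
wandering set. -/
def ZTotallyDissipative {α : Type*} [MeasurableSpace α] (σ : Measure α)
    (Uz : ℤ → α → α) : Prop :=
  ∃ W : Set α, MeasurableSet W ∧ ZWandering Uz W ∧ σ ((⋃ j : ℤ, Uz j '' W)ᶜ) = 0

/-- Ergodicity of a (not necessarily finite) invariant measure: every invariant
measurable set is null or conull. -/
def MeasErgodic {α : Type*} [MeasurableSpace α] (σ : Measure α) (U : α → α) : Prop :=
  ∀ A : Set α, MeasurableSet A → U ⁻¹' A = A → σ A = 0 ∨ σ Aᶜ = 0

/-- `Icc a b` is an `n`-crossing for `x`: a maximal finite set of consecutive integers `j`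
with `(T^{×ι})^j x ∈ Cₙ^ι`. -/
def IsCrossing (ι : Type) (n : ℕ) (x : ι → ChaconX) (a b : ℤ) : Prop :=
  a ≤ b ∧ (∀ j : ℤ, a ≤ j → j ≤ b → chaconTdZ ι j x ∈ chaconCd ι n) ∧
    chaconTdZ ι (a - 1) x ∉ chaconCd ι n ∧ chaconTdZ ι (b + 1) x ∉ chaconCd ι n

/-- `n(x)`: the smallest `n ≥ 1` with `x ∈ Cₙ^ι`. -/
def chaconNOf (ι : Type) (x : ι → ChaconX) : ℕ :=
  if h : ∃ n : ℕ, 1 ≤ n ∧ x ∈ chaconCd ι n then Nat.find h else 0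

/-- `B(τ)`: the points of `B` whose coordinate `i` lies in subcolumn `τ i` of tower `n`. -/
def chaconBoxTau (ι : Type) (n : ℕ) (B : Set (ι → ChaconX)) (τ : ι → ℕ) :
    Set (ι → ChaconX) :=
  {x ∈ B | ∀ i, chaconTn n (x i) = τ i}

/-- The transition from the `n`-diagonal `D` to the `(n+1)`-diagonal `D'` is the central
one, i.e. `D' = D(1,…,1)`. -/
def CentralTransition (ι : Type) (n : ℕ) (D D' : Set (ι → ChaconX)) : Prop :=
  ∀ B : Set (ι → ChaconX), IsNBox ι n B → B ⊆ D →
    chaconBoxTau ι n B (fun _ => 1) ⊆ D'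

/-- The `n`-diagonal containing a given set (junk value `∅` if there is none). -/
def diagOfBox (ι : Type) (n : ℕ) (B : Set (ι → ChaconX)) : Set (ι → ChaconX) :=
  if h : ∃ D, IsNDiagonal ι n D ∧ B ⊆ D then h.choose else ∅

/-- `D(τ)`: the `(n+1)`-diagonal containing `B(τ)` for an `n`-box `B ⊆ D`. -/
def diagTau (ι : Type) (n : ℕ) (D : Set (ι → ChaconX)) (τ : ι → ℕ) : Set (ι → ChaconX) :=
  if h : ∃ B, IsNBox ι n B ∧ B ⊆ D then diagOfBox ι (n + 1) (chaconBoxTau ι n h.choose τ)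
  else ∅

/-- A consistent family of diagonals `(Dₙ)_{n ≥ n₀}`. -/
def IsConsistentFamily (ι : Type) (n₀ : ℕ) (D : ℕ → Set (ι → ChaconX)) : Prop :=
  (∀ n, n₀ ≤ n → IsNDiagonal ι n (D n)) ∧
    (chaconCd ι (n₀ - 1) ∩ ⋂ n, ⋂ (_ : n₀ ≤ n), D n).Nonempty ∧
    ∀ n, n₀ ≤ n → D (n + 1) ∩ chaconCd ι n ⊆ D n

/-- `x` is seen by the family of diagonals `(Dₙ)_{n ≥ n₀}`. -/
def SeenByFam (ι : Type) (n₀ : ℕ) (D : ℕ → Set (ι → ChaconX)) (x : ι → ChaconX) : Prop :=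
  ∀ n, n₀ ≤ n → x ∉ chaconCd ι n ∨ x ∈ D n

/-- Graph joinings arising from powers of `T`:
`σ(A₁ × ⋯ × A_d) = α μ(T^{-k₁}A₁ ∩ ⋯ ∩ T^{-k_d}A_d)` for some `0 < α < ∞`. -/
def IsGraphJoining (ι : Type) [Fintype ι] (σ : Measure (ι → ChaconX)) : Prop :=
  ∃ (α : ℝ≥0∞) (k : ι → ℤ), 0 < α ∧ α ≠ ⊤ ∧
    ∀ A : ι → Set ChaconX, (∀ i, MeasurableSet (A i)) →
      σ (Set.univ.pi A) = α * chaconMu (⋂ i, chaconTZ (k i) ⁻¹' A i)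

/-- Ergodic components of `σ`: the nonzero boundedly finite `T^{×ι}`-invariant ergodic
measures, absolutely continuous with respect to `σ`, which appear in its ergodic
decomposition. -/
def IsErgodicComponent (ι : Type) [Fintype ι] (σ ρ : Measure (ι → ChaconX)) : Prop :=
  ρ ≠ 0 ∧ BoundedlyFinite ρ ∧ ρ.map (chaconTd ι) = ρ ∧ MeasErgodic ρ (chaconTd ι) ∧ ρ ≪ σ

end

/-! ### Combinatorics of the towers -/

lemma chaconH_pos (n : ℕ) : 0 < chaconH n := by
  cases n <;> simp [chaconH]

/-- Integer version of the left endpoints. -/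
def chP : ℕ → ℕ → ℕ
  | 0, _ => 0
  | n + 1, k =>
      if k < chaconH n then 3 * chP n k
      else if k < 2 * chaconH n then 3 * chP n (k - chaconH n) + 1
      else if k = 2 * chaconH n then 3 * chaconH n
      else if k ≤ 3 * chaconH n then 3 * chP n (k - 2 * chaconH n - 1) + 2
      else k

lemma chaconL_eq (n k : ℕ) : chaconL n k = (chP n k : ℝ) * (3 : ℝ)⁻¹ ^ n := by
  induction n generalizing k with
  | zero => simp [chaconL, chP]
  | succ n ih =>
    simp only [chaconL, chP]
    split_ifs <;> (try simp only [ih]) <;> push_cast <;> rw [pow_succ] <;> ring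

lemma chP_lt {n k : ℕ} (hk : k < chaconH n) : chP n k < chaconH n := by
  induction n generalizing k with
  | zero => simp [chP, chaconH]
  | succ n ih =>
    simp only [chP]
    simp only [chaconH] at hk ⊢
    split_ifs with h1 h2 h3 h4
    · have := ih h1; omega
    · have := @ih (k - chaconH n) (by omega); omega
    · omega
    · have := @ih (k - 2 * chaconH n - 1) (by omega); omega
    · omega

lemma chP_inj {n k k' : ℕ} (hk : k < chaconH n) (hk' : k' < chaconH n)
    (h : chP n k = chP n k') : k = k' := by
  induction n generalizing k k' with
  | zero => simp only [chaconH] at hk hk'; omega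
  | succ n ih =>
    simp only [chP] at h
    simp only [chaconH] at hk hk'
    have A : ∀ j, j < chaconH n → chP n j < chaconH n := fun j hj => chP_lt hj
    have a1 := A k
    have a2 := A (k - chaconH n)
    have a3 := A (k - 2 * chaconH n - 1)
    have b1 := A k'
    have b2 := A (k' - chaconH n)
    have b3 := A (k' - 2 * chaconH n - 1)
    split_ifs at h with h1 h2 h3 h4 h5 h6 h7 h8 h9 h10 h11 h12 h13 h14 h15 h16 h17 h18 <;>
      first
      | omega
      | (have := @ih k k' (by omega) (by omega) (by omega); omega)
      | (have := @ih (k - chaconH n) (k' - chaconH n) (by omega) (by omega) (by omega); omega)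
      | (have := @ih (k - 2 * chaconH n - 1) (k' - 2 * chaconH n - 1)
          (by omega) (by omega) (by omega); omega)

/-- Offsets of the three copies of tower `n` in tower `n+1`. -/
def chOff (n c : ℕ) : ℕ := if c = 0 then 0 else if c = 1 then chaconH n else 2 * chaconH n + 1

lemma chOff_lt (n c k : ℕ) (hk : k < chaconH n) : k + chOff n c < chaconH (n + 1) / 2 := by
  simp only [chOff, chaconH]; split_ifs <;> omega

lemma chOff_lt' (n c k : ℕ) (hk : k < chaconH n) : k + chOff n c < chaconH (n + 1) := by
  simp only [chOff, chaconH]; split_ifs <;> omega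

lemma chP_off {n k c : ℕ} (hk : k < chaconH n) (hc : c < 3) :
    chP (n + 1) (k + chOff n c) = 3 * chP n k + c := by
  have : c = 0 ∨ c = 1 ∨ c = 2 := by omega
  rcases this with rfl | rfl | rfl
  · simp [chP, chOff, hk]
  · have h1 : ¬ (k + chaconH n < chaconH n) := by omega
    have h2 : k + chaconH n < 2 * chaconH n := by omega
    simp [chP, chOff, h2]
  · have h1 : ¬ (k + (2 * chaconH n + 1) < chaconH n) := by omega
    have h2 : ¬ (k + (2 * chaconH n + 1) < 2 * chaconH n) := by omega
    have h3 : ¬ (k + (2 * chaconH n + 1) = 2 * chaconH n) := by omega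
    have h4 : k + (2 * chaconH n + 1) ≤ 3 * chaconH n := by omega
    have h5 : k + (2 * chaconH n + 1) - 2 * chaconH n - 1 = k := by omega
    have h6 : chOff n 2 = 2 * chaconH n + 1 := by simp [chOff]
    rw [h6, chP]
    rw [if_neg h1, if_neg h2, if_neg h3, if_pos h4, h5]

lemma chP_surj {n q : ℕ} (hq : q < chaconH n) : ∃ k, k < chaconH n ∧ chP n k = q := by
  induction n generalizing q with
  | zero => exact ⟨0, by simp [chaconH], by simp only [chaconH] at hq; simp [chP]; omega⟩
  | succ n ih =>
    rcases lt_trichotomy q (3 * chaconH n) with h | h | h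
    · obtain ⟨k, hk, hk'⟩ := @ih (q / 3) (by omega)
      exact ⟨k + chOff n (q % 3), chOff_lt' _ _ _ hk, by
        rw [chP_off hk (by omega)]; omega⟩
    · have := chaconH_pos n
      refine ⟨2 * chaconH n, by simp only [chaconH]; omega, ?_⟩
      have h1 : ¬ (2 * chaconH n < chaconH n) := by omega
      simp [chP, h, h1]
    · refine ⟨q, hq, ?_⟩
      simp only [chP]
      rw [if_neg (by omega), if_neg (by omega), if_neg (by omega), if_neg (by omega)]

lemma three_inv_pow_pos (n : ℕ) : (0 : ℝ) < (3 : ℝ)⁻¹ ^ n := by positivity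

lemma mul_inv_three (n : ℕ) : (3 : ℝ) ^ n * (3 : ℝ)⁻¹ ^ n = 1 := by
  rw [← mul_pow]; norm_num

lemma mem_level_iff {n k : ℕ} {x : ℝ} (hx : 0 ≤ x) :
    x ∈ chaconLevel n k ↔ ⌊x * 3 ^ n⌋₊ = chP n k := by
  have h3 := mul_inv_three n
  have hp := three_inv_pow_pos n
  have hp' : (0 : ℝ) < 3 ^ n := by positivity
  rw [Nat.floor_eq_iff (by positivity), chaconLevel, mem_Ico, chaconL_eq]
  have e : x = (x * 3 ^ n) * 3⁻¹ ^ n := by rw [mul_assoc, h3, mul_one]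
  constructor
  · rintro ⟨h1, h2⟩
    constructor
    · nlinarith
    · nlinarith
  · rintro ⟨h1, h2⟩
    constructor
    · rw [e]; gcongr
    · rw [e]; nlinarith

lemma chaconL_nonneg (n k : ℕ) : 0 ≤ chaconL n k := by
  rw [chaconL_eq]; positivity

lemma level_nonneg {n k : ℕ} {x : ℝ} (h : x ∈ chaconLevel n k) : 0 ≤ x :=
  (chaconL_nonneg n k).trans h.1

lemma level_unique {n k k' : ℕ} {x : ℝ} (hk : k < chaconH n) (hk' : k' < chaconH n)
    (h : x ∈ chaconLevel n k) (h' : x ∈ chaconLevel n k') : k = k' := by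
  have h0 := level_nonneg h
  rw [mem_level_iff h0] at h h'
  exact chP_inj hk hk' (h.symm.trans h')

lemma chaconL_off {n k c : ℕ} (hk : k < chaconH n) (hc : c < 3) :
    chaconL (n + 1) (k + chOff n c) = chaconL n k + c * (3 : ℝ)⁻¹ ^ (n + 1) := by
  rw [chaconL_eq, chaconL_eq, chP_off hk hc, pow_succ]; push_cast; ring

lemma level_refine {n k : ℕ} {x : ℝ} (hk : k < chaconH n) (h : x ∈ chaconLevel n k) :
    ∃ c, c < 3 ∧ x ∈ chaconLevel (n + 1) (k + chOff n c) := by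
  have hx := level_nonneg h
  rw [mem_level_iff hx] at h
  refine ⟨⌊x * 3 ^ (n + 1)⌋₊ % 3, by omega, ?_⟩
  rw [mem_level_iff hx, chP_off hk (by omega), ← h]
  have : ⌊x * 3 ^ n⌋₊ = ⌊x * 3 ^ (n + 1)⌋₊ / 3 := by
    rw [← Nat.floor_div_ofNat]; congr 1; rw [pow_succ]; field_simp
  omega

lemma level_coarse {n k c : ℕ} {x : ℝ} (hk : k < chaconH n) (hc : c < 3)
    (h : x ∈ chaconLevel (n + 1) (k + chOff n c)) : x ∈ chaconLevel n k := by
  have hp := three_inv_pow_pos n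
  rw [chaconLevel, mem_Ico, chaconL_off hk hc, pow_succ] at h
  rw [chaconLevel, mem_Ico]
  have : (c : ℝ) ≤ 2 := by exact_mod_cast (by omega : c ≤ 2)
  have : (0 : ℝ) ≤ c := by positivity
  constructor <;> nlinarith [h.1, h.2]

lemma chaconH_ge (n : ℕ) : 6 ^ n ≤ chaconH n := by
  induction n with
  | zero => simp [chaconH]
  | succ n ih => simp only [chaconH, pow_succ]; omega

lemma exists_level {x : ℝ} (hx : 0 ≤ x) : ∃ N, ∀ n, N ≤ n →
    ∃ k, k < chaconH n / 2 ∧ x ∈ chaconLevel n k := by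
  obtain ⟨N, hN⟩ := pow_unbounded_of_one_lt x (by norm_num : (1 : ℝ) < 2)
  refine ⟨N + 1, fun n hn => ?_⟩
  obtain ⟨m, rfl⟩ : ∃ m, n = m + 1 := ⟨n - 1, by omega⟩
  have hm : x < 2 ^ m := hN.trans_le (pow_le_pow_right₀ (by norm_num) (by omega))
  have h1 : ⌊x * 3 ^ m⌋₊ < chaconH m := by
    rw [Nat.floor_lt (by positivity)]
    have : (6 : ℝ) ^ m ≤ chaconH m := by exact_mod_cast chaconH_ge m
    refine lt_of_lt_of_le ?_ this
    have : (6 : ℝ) ^ m = 2 ^ m * 3 ^ m := by rw [← mul_pow]; norm_num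
    rw [this]; gcongr
  obtain ⟨k, hk, hk'⟩ := chP_surj h1
  have hx' : x ∈ chaconLevel m k := by rw [mem_level_iff hx, hk']
  obtain ⟨c, hc, h⟩ := level_refine hk hx'
  exact ⟨_, chOff_lt _ _ _ hk, h⟩

/-- The copy of tower `n` inside tower `m` through a given point. -/
lemma level_copy {n m : ℕ} (hnm : n ≤ m) {k : ℕ} {x : ℝ} (hk : k < chaconH n)
    (hx : x ∈ chaconLevel n k) :
    ∃ (o : ℕ) (δ : ℝ), 0 ≤ δ ∧ δ + (3 : ℝ)⁻¹ ^ m ≤ (3 : ℝ)⁻¹ ^ n ∧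
      (∀ k', k' < chaconH n → k' + o < chaconH m ∧ chaconL m (k' + o) = chaconL n k' + δ) ∧
      x ∈ chaconLevel m (k + o) := by
  induction m, hnm using Nat.le_induction with
  | base => exact ⟨0, 0, le_rfl, by simp, fun k' h => by simpa using h, hx⟩
  | succ m hm ih =>
    obtain ⟨o, δ, h0, h1, h2, h3⟩ := ih
    obtain ⟨c, hc, h⟩ := level_refine (h2 k hk).1 h3
    have hp := three_inv_pow_pos m
    have : (c : ℝ) ≤ 2 := by exact_mod_cast (by omega : c ≤ 2)
    have : (0 : ℝ) ≤ c := by positivity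
    refine ⟨o + chOff m c, δ + c * (3 : ℝ)⁻¹ ^ (m + 1), by positivity, ?_, ?_, ?_⟩
    · rw [pow_succ]; nlinarith
    · intro k' hk'
      obtain ⟨a, b⟩ := h2 k' hk'
      rw [← add_assoc]
      exact ⟨chOff_lt' _ _ _ a, by rw [chaconL_off a hc, b]; ring⟩
    · rwa [← add_assoc]

lemma level_sub_of_copy {n m k j : ℕ} {δ : ℝ} (h0 : 0 ≤ δ)
    (h1 : δ + (3 : ℝ)⁻¹ ^ m ≤ (3 : ℝ)⁻¹ ^ n) (h2 : chaconL m j = chaconL n k + δ) :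
    chaconLevel m j ⊆ chaconLevel n k := by
  rintro x ⟨a, b⟩
  exact ⟨by linarith, by linarith⟩

lemma level_nested {n m k j : ℕ} (hnm : n ≤ m) (hk : k < chaconH n) (hj : j < chaconH m)
    {x : ℝ} (hx : x ∈ chaconLevel n k) (hx' : x ∈ chaconLevel m j) :
    chaconLevel m j ⊆ chaconLevel n k := by
  obtain ⟨o, δ, h0, h1, h2, h3⟩ := level_copy hnm hk hx
  obtain ⟨a, b⟩ := h2 k hk
  have := level_unique hj a hx' h3
  subst this
  exact level_sub_of_copy h0 h1 b

lemma shift_agree_le {n m k j : ℕ} (hnm : n ≤ m) {x : ℝ} (hk : k < chaconH n)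
    (hj : j < chaconH m)
    (hx : x ∈ chaconLevel n k) (hx' : x ∈ chaconLevel m j) :
    (k + 1 < chaconH n → chaconL n (k + 1) - chaconL n k = chaconL m (j + 1) - chaconL m j) ∧
    (∀ k', k = k' + 1 → ∃ j', j = j' + 1 ∧
      chaconL n k' - chaconL n k = chaconL m j' - chaconL m j) := by
  obtain ⟨o, δ, h0, h1, h2, h3⟩ := level_copy hnm hk hx
  obtain ⟨a, b⟩ := h2 k hk
  have := level_unique hj a hx' h3
  subst this
  constructor
  · intro hk1
    have := (h2 (k + 1) hk1).2
    rw [show k + o + 1 = k + 1 + o by ring, this, b]; ring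
  · rintro k' rfl
    refine ⟨k' + o, by ring, ?_⟩
    rw [b, (h2 k' (by omega)).2]; ring

lemma chaconT0_eq {n k : ℕ} {x : ℝ} (hk : k + 1 < chaconH n) (hx : x ∈ chaconLevel n k) :
    chaconT0 x = x - chaconL n k + chaconL n (k + 1) := by
  have h : ∃ p : ℕ × ℕ, p.2 + 1 < chaconH p.1 ∧ x ∈ chaconLevel p.1 p.2 := ⟨(n, k), hk, hx⟩
  rw [chaconT0, dif_pos h]
  obtain ⟨h1, h2⟩ := h.choose_spec
  rcases le_total n h.choose.1 with hl | hl
  · have := (shift_agree_le hl (by omega) (by omega) hx h2).1 hk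
    linarith
  · have := (shift_agree_le hl (by omega) (by omega) h2 hx).1 h1
    linarith

lemma chaconT0inv_eq {n k : ℕ} {x : ℝ} (hk : k + 1 < chaconH n)
    (hx : x ∈ chaconLevel n (k + 1)) :
    chaconT0inv x = x - chaconL n (k + 1) + chaconL n k := by
  have h : ∃ p : ℕ × ℕ, p.2 + 1 < chaconH p.1 ∧ x ∈ chaconLevel p.1 (p.2 + 1) :=
    ⟨(n, k), hk, hx⟩
  rw [chaconT0inv, dif_pos h]
  obtain ⟨h1, h2⟩ := h.choose_spec
  rcases le_total n h.choose.1 with hl | hl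
  · obtain ⟨j', e, he⟩ := (shift_agree_le hl hk h1 hx h2).2 k rfl
    have : j' = h.choose.2 := by omega
    subst this
    linarith
  · obtain ⟨j', e, he⟩ := (shift_agree_le hl h1 hk h2 hx).2 _ rfl
    have : j' = k := by omega
    subst this
    linarith

/-! ### The transformation on levels -/

/-- Level `k` of tower `n` in `X`. -/
def chLX (n k : ℕ) : Set ChaconX := {x | (x : ℝ) ∈ chaconLevel n k}

lemma chaconT_val {n k : ℕ} {x : ChaconX} (hk : k + 1 < chaconH n) (hx : x ∈ chLX n k) :
    (chaconT x : ℝ) = x - chaconL n k + chaconL n (k + 1) := by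
  have h1 : (x : ℝ) ∈ chaconLevel n k := hx
  simp only [chaconT]
  rw [chaconT0_eq hk h1, max_eq_right]
  have := chaconL_nonneg n (k + 1)
  have := h1.1
  linarith

lemma chaconTinv_val {n k : ℕ} {x : ChaconX} (hk : k + 1 < chaconH n)
    (hx : x ∈ chLX n (k + 1)) :
    (chaconTinv x : ℝ) = x - chaconL n (k + 1) + chaconL n k := by
  have h1 : (x : ℝ) ∈ chaconLevel n (k + 1) := hx
  simp only [chaconTinv]
  rw [chaconT0inv_eq hk h1, max_eq_right]
  have := chaconL_nonneg n k
  have := h1.1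
  linarith

lemma chaconT_mem {n k : ℕ} {x : ChaconX} (hk : k + 1 < chaconH n) (hx : x ∈ chLX n k) :
    chaconT x ∈ chLX n (k + 1) := by
  have h1 : (x : ℝ) ∈ chaconLevel n k := hx
  change (chaconT x : ℝ) ∈ chaconLevel n (k + 1)
  rw [chaconT_val hk hx]
  exact ⟨by linarith [h1.1], by linarith [h1.2]⟩

lemma chaconTinv_mem {n k : ℕ} {x : ChaconX} (hk : k + 1 < chaconH n)
    (hx : x ∈ chLX n (k + 1)) : chaconTinv x ∈ chLX n k := by
  have h1 : (x : ℝ) ∈ chaconLevel n (k + 1) := hx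
  change (chaconTinv x : ℝ) ∈ chaconLevel n k
  rw [chaconTinv_val hk hx]
  exact ⟨by linarith [h1.1], by linarith [h1.2]⟩

lemma exists_LX (x : ChaconX) : ∃ N, ∀ n, N ≤ n → ∃ k, k < chaconH n / 2 ∧ x ∈ chLX n k :=
  exists_level x.2

lemma half_succ_lt {n k : ℕ} (hk : k < chaconH n / 2) : k + 1 < chaconH n := by omega

lemma chaconTinv_T (x : ChaconX) : chaconTinv (chaconT x) = x := by
  obtain ⟨N, hN⟩ := exists_LX x
  obtain ⟨k, hk, hx⟩ := hN N le_rfl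
  have hk' := half_succ_lt hk
  apply Subtype.ext
  rw [chaconTinv_val hk' (chaconT_mem hk' hx), chaconT_val hk' hx]
  ring

lemma chaconT_mem_iff {n k : ℕ} {x : ChaconX} (hk : k + 1 < chaconH n) :
    chaconT x ∈ chLX n (k + 1) ↔ x ∈ chLX n k := by
  refine ⟨fun h => ?_, chaconT_mem hk⟩
  have := chaconTinv_mem hk h
  rwa [chaconTinv_T] at this

lemma LX_unique {n k k' : ℕ} {x : ChaconX} (hk : k < chaconH n) (hk' : k' < chaconH n)
    (h : x ∈ chLX n k) (h' : x ∈ chLX n k') : k = k' := level_unique hk hk' h h'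

lemma chaconT_iter_mem {n k j : ℕ} {x : ChaconX} (hk : k + j < chaconH n) (hx : x ∈ chLX n k) :
    chaconT^[j] x ∈ chLX n (k + j) := by
  induction j with
  | zero => simpa using hx
  | succ j ih =>
    rw [Function.iterate_succ_apply']
    exact chaconT_mem hk (ih (by omega))

lemma chaconTinv_iter_mem {n k j : ℕ} {x : ChaconX} (hk : k + j < chaconH n)
    (hx : x ∈ chLX n (k + j)) : chaconTinv^[j] x ∈ chLX n k := by
  induction j generalizing x with
  | zero => simpa using hx
  | succ j ih =>
    rw [Function.iterate_succ_apply]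
    exact ih (by omega) (chaconTinv_mem (by omega) hx)

lemma chaconTZ_mem {n k m : ℕ} {j : ℤ} {x : ChaconX} (hk : k < chaconH n) (hm : m < chaconH n)
    (hj : (m : ℤ) = k + j) (hx : x ∈ chLX n k) : chaconTZ j x ∈ chLX n m := by
  unfold chaconTZ
  split_ifs with h
  · obtain rfl : m = k + j.toNat := by omega
    exact chaconT_iter_mem hm hx
  · obtain rfl : k = m + (-j).toNat := by omega
    exact chaconTinv_iter_mem hk hx

lemma LX_small {n k : ℕ} {x y : ChaconX} (hx : x ∈ chLX n k) (hy : y ∈ chLX n k) :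
    dist x y < (3 : ℝ)⁻¹ ^ n := by
  have h1 : (x : ℝ) ∈ chaconLevel n k := hx
  have h2 : (y : ℝ) ∈ chaconLevel n k := hy
  rw [Subtype.dist_eq, Real.dist_eq, abs_lt]
  constructor <;> linarith [h1.1, h1.2, h2.1, h2.2]

lemma LX_meas (n k : ℕ) : MeasurableSet (chLX n k) :=
  measurable_subtype_coe measurableSet_Ico

lemma exists_three_lt {ε : ℝ} (hε : 0 < ε) : ∃ N, ∀ n, N ≤ n → (3 : ℝ)⁻¹ ^ n < ε := by
  obtain ⟨N, hN⟩ := exists_pow_lt_of_lt_one hε (by norm_num : (3 : ℝ)⁻¹ < 1)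
  exact ⟨N, fun n hn => (pow_le_pow_of_le_one (by norm_num) (by norm_num) hn).trans_lt hN⟩

lemma chaconT_measurable : Measurable chaconT := by
  apply measurable_of_isOpen
  intro U hU
  have : chaconT ⁻¹' U = ⋃ p ∈ {p : ℕ × ℕ | p.2 + 1 < chaconH p.1 ∧ chLX p.1 (p.2 + 1) ⊆ U},
      chLX p.1 p.2 := by
    ext x
    simp only [mem_preimage, mem_iUnion, mem_ofPred_eq, exists_prop, Prod.exists]
    constructor
    · intro hx
      obtain ⟨ε, hε, hb⟩ := Metric.isOpen_iff.1 hU _ hx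
      obtain ⟨N, hN⟩ := exists_LX x
      obtain ⟨M, hM⟩ := exists_three_lt hε
      obtain ⟨k, hk, hxk⟩ := hN (max N M) (le_max_left _ _)
      have hk' := half_succ_lt hk
      refine ⟨max N M, k, ⟨hk', fun y hy => hb ?_⟩, hxk⟩
      exact (LX_small hy (chaconT_mem hk' hxk)).trans (hM _ (le_max_right _ _))
    · rintro ⟨n, k, ⟨hk, hs⟩, hx⟩
      exact hs (chaconT_mem hk hx)
  rw [this]
  exact MeasurableSet.biUnion (to_countable _) (fun p _ => LX_meas _ _)

lemma chaconMu_LX (n k : ℕ) : chaconMu (chLX n k) = ENNReal.ofReal ((3 : ℝ)⁻¹ ^ n) := by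
  rw [chaconMu, comap_subtype_coe_apply measurableSet_Ici]
  have : (Subtype.val '' chLX n k : Set ℝ) = chaconLevel n k := by
    ext x
    constructor
    · rintro ⟨y, hy, rfl⟩; exact hy
    · intro hx; exact ⟨⟨x, level_nonneg hx⟩, hx, rfl⟩
  rw [this, chaconLevel, Real.volume_Ico]; congr 1; ring

/-! ### Boxes and diagonals -/

/-- The box with levels `k`. -/
def chBx {ι : Type} (n : ℕ) (k : ι → ℕ) : Set (ι → ChaconX) := {x | ∀ i, x i ∈ chLX n (k i)}

lemma chBx_eq_pi {ι : Type} (n : ℕ) (k : ι → ℕ) :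
    chBx n k = Set.univ.pi (fun i => chLX n (k i)) := by
  ext x
  constructor
  · intro h i _; exact h i
  · intro h i; exact h i trivial

/-- The left endpoint of a level, as a point of `X`. -/
noncomputable def chPt (n k : ℕ) : ChaconX := ⟨chaconL n k, chaconL_nonneg n k⟩

lemma chPt_mem (n k : ℕ) : chPt n k ∈ chLX n k := by
  change chaconL n k ∈ chaconLevel n k
  exact ⟨le_rfl, by linarith [three_inv_pow_pos n]⟩

lemma chBx_unique {ι : Type} {n : ℕ} {k k' : ι → ℕ} {x : ι → ChaconX}
    (hk : ∀ i, k i < chaconH n) (hk' : ∀ i, k' i < chaconH n)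
    (h : x ∈ chBx n k) (h' : x ∈ chBx n k') : k = k' :=
  funext fun i => LX_unique (hk i) (hk' i) (h i) (h' i)

lemma chTd_mem_iff {ι : Type} {n : ℕ} {k : ι → ℕ} (hk : ∀ i, k i + 1 < chaconH n)
    {x : ι → ChaconX} : chaconTd ι x ∈ chBx n (fun i => k i + 1) ↔ x ∈ chBx n k :=
  forall_congr' fun i => chaconT_mem_iff (hk i)

lemma mem_Cd_iff {ι : Type} {n : ℕ} {x : ι → ChaconX} :
    x ∈ chaconCd ι n ↔ ∃ m : ι → ℕ, (∀ i, m i < chaconH n / 2) ∧ x ∈ chBx n m := by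
  constructor
  · intro h
    choose m h1 h2 using h
    exact ⟨m, h1, h2⟩
  · rintro ⟨m, h1, h2⟩ i
    exact ⟨m i, h1 i, h2 i⟩

lemma half_lt {n k : ℕ} (hk : k < chaconH n / 2) : k < chaconH n := by omega

lemma diag_char {ι : Type} {n : ℕ} {D : Set (ι → ChaconX)} (hD : IsNDiagonal ι n D) :
    ∃ k : ι → ℕ, (∃ i, k i = 0) ∧ (∀ i, k i < chaconH n / 2) ∧
      ∀ x, x ∈ D ↔ ∃ j, (∀ i, k i + j < chaconH n / 2) ∧ x ∈ chBx n (fun i => k i + j) := by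
  obtain ⟨B, ℓ, hB, hm, hp, rfl⟩ := hD
  have h0 := hB 0 (Nat.zero_le _)
  have e0 : chaconTdZ ι ((0 : ℕ) : ℤ) '' B = B := by
    have : chaconTdZ ι ((0 : ℕ) : ℤ) = id := by
      funext x i; simp [chaconTdZ, chaconTZ]
    rw [this, image_id]
  rw [e0] at h0
  obtain ⟨k, hk, hBk⟩ := h0
  have hBk : B = chBx n k := hBk
  have key : ∀ j, j ≤ ℓ → (∀ i, k i + j < chaconH n / 2) ∧
      chaconTdZ ι (j : ℤ) '' B = chBx n (fun i => k i + j) := by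
    intro j
    induction j with
    | zero => intro _; exact ⟨by simpa using hk, by rw [e0]; simpa using hBk⟩
    | succ j ih =>
      intro hj
      obtain ⟨h1, _⟩ := ih (by omega)
      obtain ⟨k', hk', he⟩ := hB (j + 1) hj
      have he : chaconTdZ ι ((j + 1 : ℕ) : ℤ) '' B = chBx n k' := he
      have hlt : ∀ i, k i + (j + 1) < chaconH n := fun i => by have := h1 i; omega
      have hpt : (fun i => chPt n (k i)) ∈ B := by
        rw [hBk]; exact fun i => chPt_mem _ _
      have hx := mem_image_of_mem (chaconTdZ ι ((j + 1 : ℕ) : ℤ)) hpt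
      rw [he] at hx
      have hx' : chaconTdZ ι ((j + 1 : ℕ) : ℤ) (fun i => chPt n (k i)) ∈
          chBx n (fun i => k i + (j + 1)) := fun i =>
        chaconTZ_mem (half_lt (hk i)) (hlt i) (by push_cast; ring) (chPt_mem _ _)
      have := chBx_unique (fun i => half_lt (hk' i)) hlt hx hx'
      subst this
      exact ⟨hk', he⟩
  refine ⟨k, ?_, hk, ?_⟩
  · by_contra hne
    push Not at hne
    apply hm
    rintro _ ⟨x, hx, rfl⟩
    rw [hBk] at hx
    rw [mem_Cd_iff]
    refine ⟨fun i => k i - 1, fun i => by have := hk i; dsimp only; omega, fun i => ?_⟩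
    have h1 := hk i
    have h2 := hne i
    exact chaconTZ_mem (half_lt h1) (by dsimp only; omega) (by dsimp only; omega) (hx i)
  · have hex : ∃ i, k i + ℓ + 1 = chaconH n / 2 := by
      by_contra hne
      push Not at hne
      apply hp
      rintro _ ⟨x, hx, rfl⟩
      rw [hBk] at hx
      have h1 := (key ℓ le_rfl).1
      have hlt : ∀ i, k i + ℓ + 1 < chaconH n / 2 := fun i => by
        have := h1 i; have := hne i; omega
      rw [mem_Cd_iff]
      refine ⟨fun i => k i + ℓ + 1, hlt, fun i => ?_⟩
      exact chaconTZ_mem (half_lt (hk i)) (half_lt (hlt i)) (by push_cast; ring) (hx i)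
    obtain ⟨i0, hi0⟩ := hex
    intro x
    simp only [mem_iUnion, Finset.mem_range, exists_prop]
    constructor
    · rintro ⟨j, hj, hx⟩
      obtain ⟨h1, h2⟩ := key j (by omega)
      rw [h2] at hx
      exact ⟨j, h1, hx⟩
    · rintro ⟨j, hj, hx⟩
      have hj' : j ≤ ℓ := by have := hj i0; omega
      refine ⟨j, by omega, ?_⟩
      rw [(key j hj').2]; exact hx

lemma chaconTn_eq {n k : ℕ} {x : ChaconX} (hk : k < chaconH n) (hx : x ∈ chLX n k) :
    chaconTn n x = 1 + (⌊((x : ℝ) - chaconL n k) * (3 : ℝ) ^ (n + 1)⌋).toNat := by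
  have h : ∃ k, k < chaconH n ∧ (x : ℝ) ∈ chaconLevel n k := ⟨k, hk, hx⟩
  rw [chaconTn, dif_pos h]
  have := level_unique hk h.choose_spec.1 hx h.choose_spec.2
  rw [← this]

lemma LX_of_Tn {n k : ℕ} {x : ChaconX} (hk : k < chaconH n) (hx : x ∈ chLX n k)
    (h : chaconTn n x = 1) : x ∈ chLX (n + 1) k := by
  obtain ⟨c, hc, hxc⟩ := level_refine hk hx
  have hL := chaconL_off hk hc
  rw [chaconTn_eq hk hx] at h
  have h3 := mul_inv_three (n + 1)
  have hge : (c : ℝ) ≤ ((x : ℝ) - chaconL n k) * (3 : ℝ) ^ (n + 1) := by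
    have h1 := hxc.1
    rw [hL] at h1
    have : (0 : ℝ) < 3 ^ (n + 1) := by positivity
    nlinarith
  have hfl : (c : ℤ) ≤ ⌊((x : ℝ) - chaconL n k) * (3 : ℝ) ^ (n + 1)⌋ := by
    rw [Int.le_floor]; exact_mod_cast hge
  have : c = 0 := by omega
  subst this
  have h4 : (x : ℝ) ∈ chaconLevel (n + 1) k := by simpa [chOff] using hxc
  exact h4

lemma Tn_pt {n k : ℕ} (hk : k < chaconH n) : chaconTn n (chPt n k) = 1 := by
  rw [chaconTn_eq hk (chPt_mem n k)]
  simp [chPt]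

lemma pt_succ {n k : ℕ} (hk : k < chaconH n) : chPt n k ∈ chLX (n + 1) k :=
  LX_of_Tn hk (chPt_mem n k) (Tn_pt hk)

lemma half_half {n k : ℕ} (hk : k < chaconH n / 2) : k < chaconH (n + 1) / 2 := by
  simp only [chaconH]; omega

lemma chBx_meas {d : ℕ} (n : ℕ) (k : Fin d → ℕ) : MeasurableSet (chBx n k) := by
  rw [chBx_eq_pi]; exact MeasurableSet.univ_pi fun i => LX_meas _ _

lemma chBx_bdd {d : ℕ} (n : ℕ) (k : Fin d → ℕ) : Bornology.IsBounded (chBx n k) := by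
  rw [chBx_eq_pi]
  apply Bornology.IsBounded.pi
  intro i
  rw [Metric.isBounded_iff]
  exact ⟨_, fun x hx y hy => (LX_small hx hy).le⟩

/-! ### Direct implication -/

lemma central_of_graph {d n₀ : ℕ} (σ : Measure (Fin d → ChaconX))
    (D : ℕ → Set (Fin d → ChaconX))
    (hD : ∀ n, n₀ ≤ n → IsNDiagonal (Fin d) n (D n) ∧ σ (chaconCd (Fin d) n \ D n) = 0)
    (hg : IsGraphJoining (Fin d) σ) :
    ∃ n₁ : ℕ, n₀ ≤ n₁ ∧ ∀ n, n₁ ≤ n →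
        CentralTransition (Fin d) n (D n) (D (n + 1)) := by
  obtain ⟨α, k, hα, -, hσ⟩ := hg
  set K : ℕ := ∑ i, (k i).natAbs with hK
  have hKi : ∀ i, (k i).natAbs ≤ K := fun i =>
    Finset.single_le_sum (f := fun i => (k i).natAbs) (fun _ _ => Nat.zero_le _)
      (Finset.mem_univ i)
  have key : ∀ n, n₀ ≤ n → 4 * K + 2 ≤ n → ∀ kn : Fin d → ℕ,
      (∀ x, x ∈ D n ↔ ∃ j, (∀ i, kn i + j < chaconH n / 2) ∧ x ∈ chBx n (fun i => kn i + j)) →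
      ∃ j : ℕ, ∀ i, (kn i : ℤ) + j = k i + K := by
    intro n hn hn' kn hkn
    have hbig : 2 * K < chaconH n / 2 := by
      have h1 := chaconH_ge n
      have h2 : n < 6 ^ n := Nat.lt_pow_self (by norm_num)
      omega
    set m : Fin d → ℕ := fun i => (k i + K).toNat with hm
    have hmi : ∀ i, (m i : ℤ) = k i + K := fun i => by
      have := hKi i; simp only [hm]; omega
    have hmlt : ∀ i, m i < chaconH n / 2 := fun i => by
      have := hKi i; have := hmi i; omega
    have hpos : 0 < σ (chBx n m) := by
      rw [chBx_eq_pi, hσ _ (fun i => LX_meas _ _)]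
      refine ENNReal.mul_pos hα.ne' ?_
      have hsub : chLX n K ⊆ ⋂ i, chaconTZ (k i) ⁻¹' chLX n (m i) := by
        intro x hx
        rw [mem_iInter]
        intro i
        exact chaconTZ_mem (by omega) (half_lt (hmlt i)) (by rw [hmi i]; ring) hx
      have h2 := measure_mono (μ := chaconMu) hsub
      rw [chaconMu_LX] at h2
      exact (lt_of_lt_of_le (ENNReal.ofReal_pos.2 (three_inv_pow_pos n)) h2).ne'
    have : ∃ x ∈ chBx n m, x ∈ D n := by
      by_contra hne
      push Not at hne
      have : chBx n m ⊆ chaconCd (Fin d) n \ D n := fun x hx =>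
        ⟨mem_Cd_iff.2 ⟨m, hmlt, hx⟩, hne x hx⟩
      exact hpos.ne' (measure_mono_null this (hD n hn).2)
    obtain ⟨x, hx, hxD⟩ := this
    obtain ⟨j, hj, hxj⟩ := (hkn x).1 hxD
    have := chBx_unique (fun i => half_lt (hmlt i)) (fun i => half_lt (hj i)) hx hxj
    refine ⟨j, fun i => ?_⟩
    rw [← hmi i, this]; push_cast; ring
  refine ⟨n₀ + (4 * K + 2), by omega, fun n hn => ?_⟩
  obtain ⟨kn, ⟨i0, hi0⟩, -, hkD⟩ := diag_char (hD n (by omega)).1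
  obtain ⟨kn', ⟨i1, hi1⟩, -, hkD'⟩ := diag_char (hD (n + 1) (by omega)).1
  obtain ⟨j, hj⟩ := key n (by omega) (by omega) kn hkD
  obtain ⟨j', hj'⟩ := key (n + 1) (by omega) (by omega) kn' hkD'
  have hkk : kn = kn' := by
    funext i
    have a := hj i0
    have b := hj' i0
    have c := hj i1
    have e := hj' i1
    have f := hj i
    have g := hj' i
    omega
  subst hkk
  intro B hB hBD x hx
  have hxB := hBD hx.1
  obtain ⟨l, hl, hxl⟩ := (hkD x).1 hxB
  refine (hkD' x).2 ⟨l, fun i => half_half (hl i), fun i => ?_⟩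
  exact LX_of_Tn (half_lt (hl i)) (hxl i) (hx.2 i)

/-! ### Converse implication -/

lemma chaconTd_measurable (d : ℕ) : Measurable (chaconTd (Fin d)) :=
  measurable_pi_lambda _ fun i => chaconT_measurable.comp (measurable_pi_apply i)

/-- The generating family of boxes. -/
def chBoxes (d N : ℕ) : Set (Set (Fin d → ChaconX)) :=
  {s | ∃ n, N ≤ n ∧ ∃ m : Fin d → ℕ, (∀ i, m i < chaconH n / 2) ∧ s = chBx n m}

lemma exists_box {d : ℕ} (x : Fin d → ChaconX) : ∃ M, ∀ n, M ≤ n →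
    ∃ m : Fin d → ℕ, (∀ i, m i < chaconH n / 2) ∧ x ∈ chBx n m := by
  choose f hf using fun i => exists_LX (x i)
  refine ⟨∑ i, f i, fun n hn => ?_⟩
  have : ∀ i, ∃ k, k < chaconH n / 2 ∧ x i ∈ chLX n k := fun i =>
    hf i n ((Finset.single_le_sum (f := f) (fun _ _ => Nat.zero_le _)
      (Finset.mem_univ i)).trans hn)
  choose m h1 h2 using this
  exact ⟨m, h1, h2⟩

lemma chBoxes_countable (d N : ℕ) : (chBoxes d N).Countable := by
  refine (countable_range (fun p : ℕ × (Fin d → ℕ) => chBx p.1 p.2)).mono ?_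
  rintro s ⟨n, -, m, -, rfl⟩
  exact ⟨(n, m), rfl⟩

lemma chBoxes_pi (d N : ℕ) : IsPiSystem (chBoxes d N) := by
  have key : ∀ n m : ℕ, n ≤ m → ∀ (k j : Fin d → ℕ), (∀ i, k i < chaconH n / 2) →
      (∀ i, j i < chaconH m / 2) → (chBx n k ∩ chBx m j).Nonempty → chBx m j ⊆ chBx n k := by
    rintro n m hnm k j hk hj ⟨x, hx, hx'⟩ y hy i
    exact level_nested hnm (half_lt (hk i)) (half_lt (hj i)) (hx i) (hx' i) (hy i)
  rintro s ⟨n, hn, k, hk, rfl⟩ t ⟨m, hm, j, hj, rfl⟩ hne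
  rcases le_total n m with h | h
  · rw [inter_eq_self_of_subset_right (key n m h k j hk hj hne)]
    exact ⟨m, hm, j, hj, rfl⟩
  · rw [inter_eq_self_of_subset_left (key m n h j k hj hk (by rwa [inter_comm]))]
    exact ⟨n, hn, k, hk, rfl⟩

lemma chBoxes_gen (d N : ℕ) :
    (MeasurableSpace.pi : MeasurableSpace (Fin d → ChaconX)) =
      MeasurableSpace.generateFrom (chBoxes d N) := by
  apply le_antisymm
  · have hb : (MeasurableSpace.pi : MeasurableSpace (Fin d → ChaconX)) =
        borel (Fin d → ChaconX) := BorelSpace.measurable_eq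
    rw [hb, borel]
    apply MeasurableSpace.generateFrom_le
    intro U hU
    have hU : IsOpen U := hU
    have : U = ⋃₀ {s | s ∈ chBoxes d N ∧ s ⊆ U} := by
      apply subset_antisymm
      · intro x hx
        obtain ⟨ε, hε, hball⟩ := Metric.isOpen_iff.1 hU x hx
        obtain ⟨M, hM⟩ := exists_box x
        obtain ⟨M', hM'⟩ := exists_three_lt hε
        obtain ⟨m, hm, hxm⟩ := hM (M + M' + N) (by omega)
        refine ⟨chBx (M + M' + N) m, ⟨⟨_, by omega, m, hm, rfl⟩, fun y hy => hball ?_⟩, hxm⟩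
        rw [Metric.mem_ball, dist_pi_lt_iff hε]
        exact fun i => (LX_small (hy i) (hxm i)).trans (hM' _ (by omega))
      · exact sUnion_subset fun s hs => hs.2
    rw [this]
    refine MeasurableSet.sUnion ((chBoxes_countable d N).mono fun s hs => hs.1) ?_
    exact fun s hs => MeasurableSpace.measurableSet_generateFrom hs.1
  · apply MeasurableSpace.generateFrom_le
    rintro s ⟨n, -, m, -, rfl⟩
    exact chBx_meas _ _

lemma chOff_inj {n c c' : ℕ} (hc : c < 3) (hc' : c' < 3) (h : chOff n c = chOff n c') :
    c = c' := by
  have := chaconH_pos n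
  simp only [chOff] at h
  split_ifs at h <;> omega

lemma ofReal_three (n : ℕ) : ENNReal.ofReal ((3 : ℝ)⁻¹ ^ n) = (3 : ℝ≥0∞)⁻¹ ^ n := by
  rw [ENNReal.ofReal_pow (by positivity), ENNReal.ofReal_inv_of_pos (by norm_num)]
  simp

lemma graph_of_central {d n₀ : ℕ} (σ : Measure (Fin d → ChaconX))
    (hbf : BoundedlyFinite σ) (hinv : σ.map (chaconTd (Fin d)) = σ)
    (D : ℕ → Set (Fin d → ChaconX))
    (hD : ∀ n, n₀ ≤ n → IsNDiagonal (Fin d) n (D n) ∧ σ (chaconCd (Fin d) n \ D n) = 0)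
    (hpos : ∀ n, n₀ ≤ n → 0 < σ (chaconCd (Fin d) n))
    (n₁ : ℕ) (hn₁ : n₀ ≤ n₁)
    (hc : ∀ n, n₁ ≤ n → CentralTransition (Fin d) n (D n) (D (n + 1))) :
    IsGraphJoining (Fin d) σ := by
  obtain ⟨k, ⟨i0, hi0⟩, hk₁, hkD₁⟩ := diag_char (hD n₁ hn₁).1
  have hall : ∀ n, n₁ ≤ n → (∀ i, k i < chaconH n / 2) ∧
      ∀ x, x ∈ D n ↔ ∃ j, (∀ i, k i + j < chaconH n / 2) ∧ x ∈ chBx n (fun i => k i + j) := by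
    intro n hn
    induction n, hn using Nat.le_induction with
    | base => exact ⟨hk₁, hkD₁⟩
    | succ n hn ih =>
      obtain ⟨hk, hkD⟩ := ih
      obtain ⟨k', ⟨i1, hi1⟩, hk', hkD'⟩ := diag_char (hD (n + 1) (by omega)).1
      have hBD : chBx n k ⊆ D n := fun x hx =>
        (hkD x).2 ⟨0, by simpa using hk, by simpa using hx⟩
      have hx := hc n hn (chBx n k) ⟨k, hk, rfl⟩ hBD
        (show (fun i => chPt n (k i)) ∈ _ from
          ⟨fun i => chPt_mem _ _, fun i => Tn_pt (half_lt (hk i))⟩)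
      obtain ⟨j, hj, hxj⟩ := (hkD' _).1 hx
      have hx' : (fun i => chPt n (k i)) ∈ chBx (n + 1) k := fun i => pt_succ (half_lt (hk i))
      have e := chBx_unique (fun i => half_lt (half_half (hk i))) (fun i => half_lt (hj i)) hx' hxj
      have e0 := congrFun e i0
      have : j = 0 := by omega
      subst this
      have : k = k' := by simpa using e
      subst this
      exact ⟨hk', hkD'⟩
  have hshift : ∀ n (m : Fin d → ℕ), (∀ i, m i + 1 < chaconH n) →
      σ (chBx n (fun i => m i + 1)) = σ (chBx n m) := by
    intro n m hm
    conv_lhs => rw [← hinv]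
    rw [Measure.map_apply (chaconTd_measurable d) (chBx_meas _ _)]
    congr 1
    ext x
    exact chTd_mem_iff hm
  have hshift' : ∀ n j, (∀ i, k i + j < chaconH n) →
      σ (chBx n (fun i => k i + j)) = σ (chBx n k) := by
    intro n j
    induction j with
    | zero => intro _; rfl
    | succ j ih =>
      intro hj
      rw [← ih (fun i => by have := hj i; omega)]
      exact hshift n (fun i => k i + j) hj
  have hrec : ∀ n, n₁ ≤ n → σ (chBx n k) = 3 * σ (chBx (n + 1) k) := by
    intro n hn
    obtain ⟨hk, hkD⟩ := hall n hn
    obtain ⟨hk', hkD'⟩ := hall (n + 1) (by omega)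
    have hlt : ∀ (c : Fin 3) i, k i + chOff n c < chaconH (n + 1) / 2 := fun c i =>
      chOff_lt _ _ _ (half_lt (hk i))
    have h1 : chBx n k ∩ D (n + 1) = ⋃ c : Fin 3, chBx (n + 1) (fun i => k i + chOff n c) := by
      ext x
      rw [mem_iUnion]
      constructor
      · rintro ⟨hx, hxD⟩
        have : ∀ i, ∃ c, c < 3 ∧ x i ∈ chLX (n + 1) (k i + chOff n c) := fun i =>
          level_refine (half_lt (hk i)) (hx i)
        choose τ hτ hxτ using this
        obtain ⟨j, hj, hxj⟩ := (hkD' x).1 hxD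
        have e := chBx_unique (fun i => half_lt (chOff_lt _ _ _ (half_lt (hk i))))
          (fun i => half_lt (hj i)) (show x ∈ chBx (n + 1) (fun i => k i + chOff n (τ i)) from hxτ)
          hxj
        have e0 := congrFun e i0
        refine ⟨⟨τ i0, hτ i0⟩, ?_⟩
        have : (fun i => k i + chOff n (τ i0)) = fun i => k i + j := by
          funext i; omega
        simpa only [this] using hxj
      · rintro ⟨c, hx⟩
        exact ⟨fun i => level_coarse (half_lt (hk i)) c.2 (hx i),
          (hkD' x).2 ⟨chOff n c, hlt c, hx⟩⟩
    have h2 : σ (chBx n k) = σ (chBx n k ∩ D (n + 1)) := by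
      have h3 : chBx n k ⊆ (chBx n k ∩ D (n + 1)) ∪ (chaconCd (Fin d) (n + 1) \ D (n + 1)) := by
        intro x hx
        by_cases hxD : x ∈ D (n + 1)
        · exact Or.inl ⟨hx, hxD⟩
        · refine Or.inr ⟨fun i => ?_, hxD⟩
          obtain ⟨c, -, h⟩ := level_refine (half_lt (hk i)) (hx i)
          exact ⟨_, chOff_lt _ _ _ (half_lt (hk i)), h⟩
      refine le_antisymm ((measure_mono h3).trans ((measure_union_le _ _).trans ?_))
        (measure_mono inter_subset_left)
      rw [(hD (n + 1) (by omega)).2, add_zero]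
    rw [h2, h1, measure_iUnion _ (fun c => chBx_meas _ _), tsum_fintype]
    · rw [Finset.sum_congr rfl (fun (c : Fin 3) _ => hshift' (n + 1) (chOff n c)
        (fun i => half_lt (hlt c i)))]
      simp
    · intro c c' hcc
      rw [Function.onFun, Set.disjoint_left]
      intro x hx hx'
      have e := congrFun (chBx_unique (fun i => half_lt (hlt c i))
        (fun i => half_lt (hlt c' i)) hx hx') i0
      apply hcc
      apply Fin.ext
      exact chOff_inj c.2 c'.2 (n := n) (by omega)
  set α : ℝ≥0∞ := 3 ^ n₁ * σ (chBx n₁ k) with hα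
  have h33 : (3 : ℝ≥0∞) * 3⁻¹ = 1 := ENNReal.mul_inv_cancel (by norm_num) (by norm_num)
  have hs : ∀ n, n₁ ≤ n → σ (chBx n k) = α * (3 : ℝ≥0∞)⁻¹ ^ n := by
    intro n hn
    induction n, hn using Nat.le_induction with
    | base =>
      rw [hα, mul_right_comm, ← mul_pow, h33, one_pow, one_mul]
    | succ n hn ih =>
      rw [hrec n hn] at ih
      calc σ (chBx (n + 1) k) = (3 * 3⁻¹) * σ (chBx (n + 1) k) := by rw [h33, one_mul]
        _ = (3 * σ (chBx (n + 1) k)) * 3⁻¹ := by ring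
        _ = _ := by rw [ih, pow_succ, mul_assoc]
  have hfin : ∀ n (m : Fin d → ℕ), σ (chBx n m) ≠ ⊤ := fun n m =>
    (hbf _ (chBx_meas n m) (chBx_bdd n m)).ne
  have hαpos : 0 < α := by
    refine ENNReal.mul_pos (by simp) ?_
    intro h0
    refine (hpos n₁ hn₁).ne' ?_
    have h1 : σ (D n₁) = 0 := by
      have : D n₁ ⊆ ⋃ j ∈ {j : ℕ | ∀ i, k i + j < chaconH n₁ / 2},
          chBx n₁ (fun i => k i + j) := by
        intro x hx
        obtain ⟨j, hj, hxj⟩ := (hkD₁ x).1 hx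
        exact mem_biUnion (show j ∈ {j : ℕ | ∀ i, k i + j < chaconH n₁ / 2} from hj) hxj
      refine measure_mono_null this ?_
      rw [measure_biUnion_null_iff (to_countable _)]
      intro j hj
      rw [hshift' n₁ j (fun i => half_lt (hj i)), h0]
    refine measure_mono_null (t := D n₁ ∪ (chaconCd (Fin d) n₁ \ D n₁)) ?_ ?_
    · intro x hx
      by_cases hxD : x ∈ D n₁
      · exact Or.inl hxD
      · exact Or.inr ⟨hx, hxD⟩
    · exact measure_union_null h1 (hD n₁ hn₁).2
  have hαtop : α ≠ ⊤ := ENNReal.mul_ne_top (by simp) (hfin _ _)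
  set φ : ChaconX → Fin d → ChaconX := fun x i => chaconTZ (k i : ℤ) x with hφ
  have hTZ : ∀ j : ℕ, chaconTZ (j : ℤ) = chaconT^[j] := by
    intro j; simp [chaconTZ]
  have hφm : Measurable φ := measurable_pi_lambda _ fun i => by
    simp only [hφ, hTZ]
    exact chaconT_measurable.iterate (k i)
  have heq : σ = α • chaconMu.map φ := by
    refine Measure.ext_of_generateFrom_of_cover_subset (chBoxes_gen d n₁) (chBoxes_pi d n₁)
      (subset_refl _) (chBoxes_countable d n₁) ?_ ?_ ?_
    · apply eq_univ_of_forall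
      intro x
      obtain ⟨M, hM⟩ := exists_box x
      obtain ⟨m, hm, hx⟩ := hM (M + n₁) (by omega)
      exact ⟨_, ⟨_, by omega, m, hm, rfl⟩, hx⟩
    · rintro s ⟨n, -, m, -, rfl⟩
      exact hfin _ _
    · rintro s ⟨n, hn, m, hm, rfl⟩
      obtain ⟨hk, hkD⟩ := hall n hn
      rw [Measure.smul_apply, Measure.map_apply hφm (chBx_meas _ _), smul_eq_mul]
      have hpre : ∀ x, x ∈ φ ⁻¹' chBx n m → x ∈ chLX n (m i0) ∧ m = fun i => k i + m i0 := by
        intro x hx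
        have hx0 : x ∈ chLX n (m i0) := by
          have := hx i0
          simpa [hφ, hi0, chaconTZ] using this
        refine ⟨hx0, ?_⟩
        have hlt : ∀ i, k i + m i0 < chaconH n := fun i => by
          have := hk i; have := hm i0; omega
        refine chBx_unique (fun i => half_lt (hm i)) hlt (x := φ x) hx fun i => ?_
        exact chaconTZ_mem (half_lt (hm i0)) (hlt i) (by push_cast; ring) hx0
      by_cases hmk : m = fun i => k i + m i0
      · have e : φ ⁻¹' chBx n m = chLX n (m i0) := by
          apply subset_antisymm
          · exact fun x hx => (hpre x hx).1
          · intro x hx i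
            refine chaconTZ_mem (half_lt (hm i0)) (half_lt (hm i)) ?_ hx
            have := congrFun hmk i
            rw [this]; push_cast; ring
        rw [e, chaconMu_LX, ofReal_three, ← hs n hn]
        have := hshift' n (m i0) (fun i => by
          have h1 := congrFun hmk i
          have h2 := hm i
          omega)
        rw [← this, ← hmk]
      · have e : φ ⁻¹' chBx n m = ∅ := by
          rw [eq_empty_iff_forall_notMem]
          exact fun x hx => hmk (hpre x hx).2
        rw [e, measure_empty, mul_zero]
        refine measure_mono_null ?_ (hD n (by omega)).2
        intro x hx
        refine ⟨mem_Cd_iff.2 ⟨m, hm, hx⟩, fun hxD => hmk ?_⟩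
        obtain ⟨j, hj, hxj⟩ := (hkD x).1 hxD
        have e := chBx_unique (fun i => half_lt (hm i)) (fun i => half_lt (hj i)) hx hxj
        have e0 := congrFun e i0
        simp only [hi0, zero_add] at e0
        rw [e0]; exact e
  refine ⟨α, fun i => (k i : ℤ), hαpos, hαtop, fun A hA => ?_⟩
  rw [heq, Measure.smul_apply, Measure.map_apply hφm (MeasurableSet.univ_pi hA), smul_eq_mul]
  congr 2
  ext x
  simp [hφ]

/-- **Proposition (identification of graph joinings).**  A diagonal measure `σ` on `X^d`
(with charged diagonals `(Dₙ)_{n ≥ n₀}`) is a graph joining arising from powers of `T`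
if and only if there exists `n₁ ≥ n₀` such that for all `n ≥ n₁` the transition from
`Dₙ(σ)` to `D_{n+1}(σ)` is the central one, `D_{n+1}(σ) = Dₙ(σ)(1,…,1)`. -/
theorem chacon_graph_iff_central (d n₀ : ℕ) (σ : Measure (Fin d → ChaconX))
    (hbf : BoundedlyFinite σ) (hinv : σ.map (chaconTd (Fin d)) = σ)
    (D : ℕ → Set (Fin d → ChaconX))
    (hD : ∀ n, n₀ ≤ n → IsNDiagonal (Fin d) n (D n) ∧ σ (chaconCd (Fin d) n \ D n) = 0)
    (hpos : ∀ n, n₀ ≤ n → 0 < σ (chaconCd (Fin d) n)) :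
    IsGraphJoining (Fin d) σ ↔
      ∃ n₁ : ℕ, n₀ ≤ n₁ ∧ ∀ n, n₁ ≤ n →
        CentralTransition (Fin d) n (D n) (D (n + 1)) := by
  constructor
  · exact central_of_graph σ D hD
  · rintro ⟨n₁, hn₁, hc⟩
    exact graph_of_central σ hbf hinv D hD hpos n₁ hn₁ hc
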